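/- Let ν be the standard Gaussian measure on ℝ^d and B₁, ..., B_K a measurable partition of ℝ^d with ν(B_i) ≤ 1/2 for all i. Then for every η ≥ 0, the measure of points within ℓ₂-distance η of a different cell satisfies ν({z : dist(z, ∪_{j ≠ i(z)} B_j) ≤ η}) ≥ 1 - √(π/2)·e^{-η²/2}, where i(z) is the index of the cell containing z. -/

import Mathlib

open Real Set MeasureTheory ProbabilityTheory

/-- The standard normal cumulative distribution function. -/
noncomputable def Phi (x : ℝ) : ℝ :=
  (Real.sqrt (2 * π))⁻¹ * ∫ u in Set.Iic x, Real.exp (-u ^ 2 / 2)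

/-- The inverse of the standard normal cdf. -/
noncomputable def PhiInv : ℝ → ℝ := Function.invFun Phi

/-- The standard Gaussian measure `N(0, I_d)` on `ℝ^d`. -/
noncomputable def stdGaussian (d : ℕ) : Measure (Fin d → ℝ) :=
  Measure.pi fun _ => gaussianReal 0 1

/-- The Euclidean (ℓ₂) norm on `ℝ^d`. -/
noncomputable def l2 {d : ℕ} (z : Fin d → ℝ) : ℝ := Real.sqrt (∑ i, z i ^ 2)

/-- The ℓ₂ distance from a point to a set. -/
noncomputable def distSet {d : ℕ} (z : Fin d → ℝ) (A : Set (Fin d → ℝ)) : ℝ :=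
  sInf {t | ∃ z' ∈ A, t = l2 (z - z')}


open Filter Topology

/-! ### The standard normal density and distribution function -/

/-- The density of the standard normal distribution. -/
noncomputable def normalDensity (x : ℝ) : ℝ := (√(2 * π))⁻¹ * exp (-x ^ 2 / 2)

lemma normalDensity_eq_gaussianPDFReal : normalDensity = gaussianPDFReal 0 1 := by
  ext x
  simp [normalDensity, gaussianPDFReal]

lemma normalDensity_pos (x : ℝ) : 0 < normalDensity x := by
  unfold normalDensity; positivity

lemma continuous_normalDensity : Continuous normalDensity := by
  unfold normalDensity; fun_prop

lemma normalDensity_neg (x : ℝ) : normalDensity (-x) = normalDensity x := by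
  simp [normalDensity]

lemma normalDensity_le_of_abs_le {x y : ℝ} (h : |x| ≤ |y|) :
    normalDensity y ≤ normalDensity x := by
  have := sq_le_sq.2 h
  unfold normalDensity
  gcongr (√(2 * π))⁻¹ * exp ?_
  linarith

lemma normalDensity_le_zero_apply (x : ℝ) : normalDensity x ≤ normalDensity 0 :=
  normalDensity_le_of_abs_le (by simp)

lemma hasDerivAt_normalDensity (x : ℝ) :
    HasDerivAt normalDensity (-x * normalDensity x) x := by
  have h : HasDerivAt (fun y : ℝ ↦ -y ^ 2 / 2) (-x) x := by
    convert! (((hasDerivAt_id x).pow 2).neg.div_const 2) using 1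
    simp
    ring
  convert! (h.exp.const_mul (√(2 * π))⁻¹) using 1
  simp only [normalDensity]
  ring

lemma Phi_eq_integral (x : ℝ) : Phi x = ∫ u in Iic x, normalDensity u := by
  simp only [Phi, normalDensity, integral_const_mul]

lemma integrable_normalDensity : Integrable normalDensity := by
  rw [normalDensity_eq_gaussianPDFReal]
  exact integrable_gaussianPDFReal 0 1

lemma Phi_eq_cdf (x : ℝ) : Phi x = cdf (gaussianReal 0 1) x := by
  rw [cdf_eq_real, Measure.real, gaussianReal_apply_eq_integral 0 one_ne_zero,
    ENNReal.toReal_ofReal, Phi_eq_integral, normalDensity_eq_gaussianPDFReal]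
  exact integral_nonneg fun y ↦ gaussianPDFReal_nonneg 0 1 y

lemma hasDerivAt_Phi (x : ℝ) : HasDerivAt Phi (normalDensity x) x := by
  have h : Phi = fun y ↦ Phi 0 + ∫ u in (0 : ℝ)..y, normalDensity u := by
    ext y
    rw [← intervalIntegral.integral_Iic_sub_Iic integrable_normalDensity.integrableOn
      integrable_normalDensity.integrableOn, ← Phi_eq_integral, ← Phi_eq_integral]
    ring
  rw [h]
  exact (continuous_normalDensity.integral_hasStrictDerivAt 0 x).hasDerivAt.const_add _

lemma continuous_Phi : Continuous Phi :=
  continuous_iff_continuousAt.2 fun x ↦ (hasDerivAt_Phi x).continuousAt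

lemma strictMono_Phi : StrictMono Phi :=
  strictMono_of_deriv_pos fun x ↦ by
    rw [(hasDerivAt_Phi x).deriv]
    exact normalDensity_pos x

lemma tendsto_Phi_atTop : Tendsto Phi atTop (𝓝 1) := by
  rw [funext Phi_eq_cdf]
  exact tendsto_cdf_atTop (gaussianReal 0 1)

lemma tendsto_Phi_atBot : Tendsto Phi atBot (𝓝 0) := by
  rw [funext Phi_eq_cdf]
  exact tendsto_cdf_atBot (gaussianReal 0 1)

lemma Phi_pos (x : ℝ) : 0 < Phi x :=
  (strictMono_Phi.monotone.le_of_tendsto tendsto_Phi_atBot (x - 1)).trans_lt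
    (strictMono_Phi (sub_one_lt x))

lemma Phi_lt_one (x : ℝ) : Phi x < 1 :=
  (strictMono_Phi (lt_add_one x)).trans_le
    (strictMono_Phi.monotone.ge_of_tendsto tendsto_Phi_atTop (x + 1))

lemma Phi_neg (x : ℝ) : Phi (-x) = 1 - Phi x := by
  have h : Phi (-x) = ∫ u in Ioi x, normalDensity u := by
    rw [Phi_eq_integral, ← integral_comp_neg_Ioi]
    simp [normalDensity_neg]
  have h1 : ∫ u, normalDensity u = 1 := by
    rw [normalDensity_eq_gaussianPDFReal]
    exact integral_gaussianPDFReal_eq_one 0 one_ne_zero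
  have h2 := integral_add_compl (s := Iic x) measurableSet_Iic integrable_normalDensity
  rw [compl_Iic, h1, ← h, ← Phi_eq_integral] at h2
  linarith

lemma Phi_zero : Phi 0 = 1 / 2 := by
  have := Phi_neg 0
  rw [neg_zero] at this
  linarith

/-- Multiplicative tail decay of the normal distribution. -/
lemma Phi_neg_add_le {t η : ℝ} (ht : 0 ≤ t) (hη : 0 ≤ η) :
    Phi (-(t + η)) ≤ exp (-η ^ 2 / 2) * Phi (-t) := by
  have h (s : ℝ) : Phi (-s) = ∫ u in Iic (0 : ℝ), normalDensity (u - s) := by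
    rw [Phi_eq_integral]
    have := integral_indicator (μ := volume) (f := normalDensity) (measurableSet_Iic (a := -s))
    rw [← this, ← integral_indicator measurableSet_Iic,
      ← integral_sub_right_eq_self (fun u ↦ (Iic (-s)).indicator normalDensity u) s]
    congr 1
    ext u
    simp [indicator]
  rw [h, h, ← integral_const_mul]
  refine setIntegral_mono_on (integrable_normalDensity.comp_sub_right _).integrableOn
    ((integrable_normalDensity.comp_sub_right _).const_mul _).integrableOn measurableSet_Iic ?_
  intro u hu
  simp only [normalDensity]
  rw [mul_left_comm, ← exp_add]
  gcongr
  simp only [mem_Iic] at hu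
  nlinarith [mul_nonneg ht hη, mul_nonneg (neg_nonneg.2 hu) hη]

/-! ### The normal quantile function and the Gaussian isoperimetric profile -/

lemma PhiInv_Phi (x : ℝ) : PhiInv (Phi x) = x :=
  Function.leftInverse_invFun strictMono_Phi.injective x

lemma exists_Phi_eq {y : ℝ} (hy : y ∈ Ioo (0 : ℝ) 1) : ∃ x, Phi x = y := by
  obtain ⟨a, ha⟩ := (tendsto_Phi_atBot.eventually_lt_const hy.1).exists
  obtain ⟨b, hb⟩ := (tendsto_Phi_atTop.eventually_const_lt hy.2).exists
  exact mem_range_of_exists_le_of_exists_ge continuous_Phi ⟨a, ha.le⟩ ⟨b, hb.le⟩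

lemma Phi_PhiInv {y : ℝ} (hy : y ∈ Ioo (0 : ℝ) 1) : Phi (PhiInv y) = y := by
  obtain ⟨x, rfl⟩ := exists_Phi_eq hy
  rw [PhiInv_Phi]

lemma strictMonoOn_PhiInv : StrictMonoOn PhiInv (Ioo 0 1) := fun x hx y hy hxy ↦ by
  rwa [← strictMono_Phi.lt_iff_lt, Phi_PhiInv hx, Phi_PhiInv hy]

lemma PhiInv_one_sub {y : ℝ} (hy : y ∈ Ioo (0 : ℝ) 1) : PhiInv (1 - y) = -PhiInv y := by
  obtain ⟨x, rfl⟩ := exists_Phi_eq hy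
  rw [← Phi_neg, PhiInv_Phi, PhiInv_Phi]

lemma continuousAt_PhiInv {y : ℝ} (hy : y ∈ Ioo (0 : ℝ) 1) : ContinuousAt PhiInv y := by
  refine strictMonoOn_PhiInv.continuousAt_of_image_mem_nhds (Ioo_mem_nhds hy.1 hy.2) ?_
  convert univ_mem
  refine eq_univ_of_forall fun x ↦ ⟨Phi x, ⟨Phi_pos x, Phi_lt_one x⟩, PhiInv_Phi x⟩

lemma hasDerivAt_PhiInv {y : ℝ} (hy : y ∈ Ioo (0 : ℝ) 1) :
    HasDerivAt PhiInv (normalDensity (PhiInv y))⁻¹ y :=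
  (hasDerivAt_Phi _).of_local_left_inverse (continuousAt_PhiInv hy) (normalDensity_pos _).ne'
    (by filter_upwards [Ioo_mem_nhds hy.1 hy.2] with z hz using Phi_PhiInv hz)

/-- The Gaussian isoperimetric profile. -/
noncomputable def gaussProfile (y : ℝ) : ℝ := normalDensity (PhiInv y)

lemma gaussProfile_pos (y : ℝ) : 0 < gaussProfile y := normalDensity_pos _

lemma gaussProfile_Phi (x : ℝ) : gaussProfile (Phi x) = normalDensity x := by
  rw [gaussProfile, PhiInv_Phi]

lemma gaussProfile_one_sub {y : ℝ} (hy : y ∈ Ioo (0 : ℝ) 1) :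
    gaussProfile (1 - y) = gaussProfile y := by
  rw [gaussProfile, PhiInv_one_sub hy, normalDensity_neg, gaussProfile]

lemma continuousOn_gaussProfile : ContinuousOn gaussProfile (Ioo 0 1) := fun _ hy ↦
  (continuous_normalDensity.continuousAt.comp (continuousAt_PhiInv hy)).continuousWithinAt

lemma hasDerivAt_gaussProfile {y : ℝ} (hy : y ∈ Ioo (0 : ℝ) 1) :
    HasDerivAt gaussProfile (-PhiInv y) y := by
  have h := (hasDerivAt_normalDensity (PhiInv y)).comp y (hasDerivAt_PhiInv hy)
  convert! h using 1
  field_simp [(normalDensity_pos (PhiInv y)).ne']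

lemma hasDerivAt_gaussProfile_sq {y : ℝ} (hy : y ∈ Ioo (0 : ℝ) 1) :
    HasDerivAt (fun z ↦ gaussProfile z ^ 2) (-2 * PhiInv y * gaussProfile y) y := by
  convert! (hasDerivAt_gaussProfile hy).pow 2 using 1
  simp
  ring

lemma hasDerivAt_PhiInv_mul_gaussProfile {y : ℝ} (hy : y ∈ Ioo (0 : ℝ) 1) :
    HasDerivAt (fun z ↦ -2 * PhiInv z * gaussProfile z) (2 * (PhiInv y ^ 2 - 1)) y := by
  convert! ((hasDerivAt_PhiInv hy).const_mul (-2)).mul (hasDerivAt_gaussProfile hy) using 1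
  rw [gaussProfile]
  field_simp [(normalDensity_pos (PhiInv y)).ne']
  ring

lemma hasDerivAt_PhiInv_sq {y : ℝ} (hy : y ∈ Ioo (0 : ℝ) 1) :
    HasDerivAt (fun z ↦ PhiInv z ^ 2) (2 * (PhiInv y / normalDensity (PhiInv y))) y := by
  convert! (hasDerivAt_PhiInv hy).pow 2 using 1
  simp
  ring

lemma monotone_div_normalDensity : Monotone fun x ↦ x / normalDensity x := by
  have h (x : ℝ) : HasDerivAt (fun x ↦ x / normalDensity x) ((1 + x ^ 2) / normalDensity x) x := by
    convert! (hasDerivAt_id x).div (hasDerivAt_normalDensity x) (normalDensity_pos x).ne' using 1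
    have := (normalDensity_pos x).ne'
    simp only [id]
    field_simp
    ring
  refine monotone_of_deriv_nonneg (fun x ↦ (h x).differentiableAt) fun x ↦ ?_
  rw [(h x).deriv]
  have := normalDensity_pos x
  positivity

/-! ### Bobkov's two-point inequality -/

lemma le_of_hasDerivAt_nonneg {F F' : ℝ → ℝ} {x : ℝ} (hx : 0 ≤ x)
    (hF : ∀ y ∈ Icc 0 x, HasDerivAt F (F' y) y) (h0 : ∀ y ∈ Icc 0 x, 0 ≤ F' y) : F 0 ≤ F x := by
  refine monotoneOn_of_hasDerivWithinAt_nonneg (f' := F') (convex_Icc 0 x)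
    (fun y hy ↦ (hF y hy).continuousAt.continuousWithinAt)
    (fun y hy ↦ (hF y (interior_subset hy)).hasDerivWithinAt)
    (fun y hy ↦ h0 y (interior_subset hy)) ⟨le_rfl, hx⟩ ⟨hx, le_rfl⟩ hx

lemma hasDerivAt_comp_const_add {F : ℝ → ℝ} {F' c y : ℝ} (h : HasDerivAt F F' (c + y)) :
    HasDerivAt (fun z ↦ F (c + z)) F' y := h.comp_const_add c y

lemma hasDerivAt_comp_const_sub {F : ℝ → ℝ} {F' c y : ℝ} (h : HasDerivAt F F' (c - y)) :
    HasDerivAt (fun z ↦ F (c - z)) (-F') y := h.comp_const_sub c y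

section TwoPoint

variable {c x : ℝ}

lemma abs_PhiInv_add_le (hx : 0 ≤ x) (hxc : x < c) (hc : c ≤ 1 / 2) :
    |PhiInv (c + x)| ≤ |PhiInv (c - x)| := by
  have h1 : c - x ∈ Ioo (0 : ℝ) 1 := ⟨by linarith, by linarith⟩
  have h2 : c + x ∈ Ioo (0 : ℝ) 1 := ⟨by linarith, by linarith⟩
  have h3 : 1 - (c - x) ∈ Ioo (0 : ℝ) 1 := ⟨by linarith [h1.2], by linarith [h1.1]⟩
  have h4 := strictMonoOn_PhiInv.monotoneOn h1 h2 (by linarith)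
  have h5 := strictMonoOn_PhiInv.monotoneOn h2 h3 (by linarith)
  rw [PhiInv_one_sub h1] at h5
  exact (abs_le.2 ⟨by linarith, h5⟩).trans (neg_le_abs _)

lemma gaussProfile_sq_sub_le (hx : 0 ≤ x) (hxc : x < c) (hc : c ≤ 1 / 2) :
    gaussProfile (c + x) ^ 2 - gaussProfile (c - x) ^ 2
      ≤ -4 * PhiInv c * gaussProfile c * x := by
  have m1 (y) (hy : y ∈ Icc 0 x) : c - y ∈ Ioo (0 : ℝ) 1 :=
    ⟨by linarith [hy.2], by linarith [hy.1]⟩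
  have m2 (y) (hy : y ∈ Icc 0 x) : c + y ∈ Ioo (0 : ℝ) 1 :=
    ⟨by linarith [hy.1], by linarith [hy.2]⟩
  set w : ℝ → ℝ := fun z ↦ -2 * PhiInv z * gaussProfile z with hw
  have first (y) (hy : y ∈ Icc 0 x) : w (c + y) + w (c - y) ≤ 2 * w c := by
    have := le_of_hasDerivAt_nonneg (x := y) (F := fun y ↦ -(w (c + y) + w (c - y)))
      (F' := fun y ↦ -(2 * (PhiInv (c + y) ^ 2 - 1) + -(2 * (PhiInv (c - y) ^ 2 - 1)))) hy.1
      (fun z hz ↦ ((hasDerivAt_comp_const_add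
        (hasDerivAt_PhiInv_mul_gaussProfile (m2 z ⟨hz.1, hz.2.trans hy.2⟩))).add
        (hasDerivAt_comp_const_sub
        (hasDerivAt_PhiInv_mul_gaussProfile (m1 z ⟨hz.1, hz.2.trans hy.2⟩)))).neg)
      (fun z hz ↦ by
        have := sq_le_sq.2 (abs_PhiInv_add_le hz.1 (hz.2.trans_lt (hy.2.trans_lt hxc)) hc)
        linarith)
    simp only [add_zero, sub_zero] at this
    linarith
  have := le_of_hasDerivAt_nonneg (x := x)
    (F := fun y ↦ 2 * w c * y - (gaussProfile (c + y) ^ 2 - gaussProfile (c - y) ^ 2))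
    (F' := fun y ↦ 2 * w c * 1 - (w (c + y) - -w (c - y))) hx
    (fun z hz ↦ ((hasDerivAt_id z).const_mul _).sub
      ((hasDerivAt_comp_const_add (F := fun z ↦ gaussProfile z ^ 2)
        (hasDerivAt_gaussProfile_sq (m2 z hz))).sub
      (hasDerivAt_comp_const_sub (F := fun z ↦ gaussProfile z ^ 2)
        (hasDerivAt_gaussProfile_sq (m1 z hz)))))
    (fun z hz ↦ by linarith [first z hz])
  simp only [add_zero, sub_zero, mul_zero, sub_self] at this
  simp only [hw] at this
  linarith

lemma le_PhiInv_sq_add (hx : 0 ≤ x) (hxc : x < c) (hc : c ≤ 1 / 2) :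
    2 * PhiInv c ^ 2 ≤ PhiInv (c + x) ^ 2 + PhiInv (c - x) ^ 2 := by
  have m1 (y) (hy : y ∈ Icc 0 x) : c - y ∈ Ioo (0 : ℝ) 1 :=
    ⟨by linarith [hy.2], by linarith [hy.1]⟩
  have m2 (y) (hy : y ∈ Icc 0 x) : c + y ∈ Ioo (0 : ℝ) 1 :=
    ⟨by linarith [hy.1], by linarith [hy.2]⟩
  have := le_of_hasDerivAt_nonneg (x := x) (F := fun y ↦ PhiInv (c + y) ^ 2 + PhiInv (c - y) ^ 2)
    (F' := fun y ↦ 2 * (PhiInv (c + y) / normalDensity (PhiInv (c + y))) +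
      -(2 * (PhiInv (c - y) / normalDensity (PhiInv (c - y))))) hx
    (fun z hz ↦ (hasDerivAt_comp_const_add (F := fun z ↦ PhiInv z ^ 2)
        (hasDerivAt_PhiInv_sq (m2 z hz))).add
      (hasDerivAt_comp_const_sub (F := fun z ↦ PhiInv z ^ 2) (hasDerivAt_PhiInv_sq (m1 z hz))))
    (fun z hz ↦ by
      have := monotone_div_normalDensity
        (strictMonoOn_PhiInv.monotoneOn (m1 z hz) (m2 z hz) (by linarith [hz.1]))
      dsimp only at this
      linarith)
  simp only [add_zero, sub_zero] at this
  linarith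

lemma le_gaussProfile_sq_add (hx : 0 ≤ x) (hxc : x < c) (hc : c ≤ 1 / 2) :
    2 * gaussProfile c ^ 2 + 2 * PhiInv c ^ 2 * x ^ 2
      ≤ gaussProfile (c + x) ^ 2 + gaussProfile (c - x) ^ 2 + 2 * x ^ 2 := by
  have m1 (y) (hy : y ∈ Icc 0 x) : c - y ∈ Ioo (0 : ℝ) 1 :=
    ⟨by linarith [hy.2], by linarith [hy.1]⟩
  have m2 (y) (hy : y ∈ Icc 0 x) : c + y ∈ Ioo (0 : ℝ) 1 :=
    ⟨by linarith [hy.1], by linarith [hy.2]⟩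
  set w : ℝ → ℝ := fun z ↦ -2 * PhiInv z * gaussProfile z with hw
  have first (y) (hy : y ∈ Icc 0 x) :
      0 ≤ w (c + y) - w (c - y) + 4 * (1 - PhiInv c ^ 2) * y := by
    have := le_of_hasDerivAt_nonneg (x := y)
      (F := fun y ↦ w (c + y) - w (c - y) + 4 * (1 - PhiInv c ^ 2) * y)
      (F' := fun y ↦ 2 * (PhiInv (c + y) ^ 2 - 1) - -(2 * (PhiInv (c - y) ^ 2 - 1))
        + 4 * (1 - PhiInv c ^ 2) * 1) hy.1
      (fun z hz ↦ ((hasDerivAt_comp_const_add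
        (hasDerivAt_PhiInv_mul_gaussProfile (m2 z ⟨hz.1, hz.2.trans hy.2⟩))).sub
        (hasDerivAt_comp_const_sub
        (hasDerivAt_PhiInv_mul_gaussProfile (m1 z ⟨hz.1, hz.2.trans hy.2⟩)))).add
        ((hasDerivAt_id z).const_mul _))
      (fun z hz ↦ by
        have := le_PhiInv_sq_add hz.1 (hz.2.trans_lt (hy.2.trans_lt hxc)) hc
        linarith)
    simpa using this
  have := le_of_hasDerivAt_nonneg (x := x)
    (F := fun y ↦ gaussProfile (c + y) ^ 2 + gaussProfile (c - y) ^ 2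
      + 2 * (1 - PhiInv c ^ 2) * y ^ 2)
    (F' := fun y ↦ w (c + y) + -w (c - y) + 2 * (1 - PhiInv c ^ 2) * (2 * y)) hx
    (fun z hz ↦ ((hasDerivAt_comp_const_add (F := fun z ↦ gaussProfile z ^ 2)
        (hasDerivAt_gaussProfile_sq (m2 z hz))).add
      (hasDerivAt_comp_const_sub (F := fun z ↦ gaussProfile z ^ 2)
        (hasDerivAt_gaussProfile_sq (m1 z hz)))).add
      (by simpa using ((hasDerivAt_id z).pow 2).const_mul (2 * (1 - PhiInv c ^ 2))))
    (fun z hz ↦ by linarith [first z hz])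
  simp only [add_zero, sub_zero] at this
  linarith

lemma two_mul_le_add_of_sq_sub_sq_le {α β γ : ℝ} (hα : 0 ≤ α) (hβ : 0 ≤ β)
    (h : (α ^ 2 - β ^ 2) ^ 2 ≤ 8 * γ ^ 2 * (α ^ 2 + β ^ 2 - 2 * γ ^ 2)) : 2 * γ ≤ α + β := by
  by_contra! hlt
  have h1 : 0 < 4 * γ ^ 2 - (α + β) ^ 2 := by nlinarith
  have h2 : 0 ≤ (4 * γ ^ 2 - (α + β) ^ 2) * ((α - β) ^ 2 - 4 * γ ^ 2) := by nlinarith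
  have h3 := nonneg_of_mul_nonneg_right h2 h1
  nlinarith [mul_nonneg hα hβ]

lemma two_mul_gaussProfile_le (hx : 0 ≤ x) (hxc : x < c) (hc : c ≤ 1 / 2) :
    2 * gaussProfile c ≤
      √(gaussProfile (c + x) ^ 2 + x ^ 2) + √(gaussProfile (c - x) ^ 2 + x ^ 2) := by
  refine two_mul_le_add_of_sq_sub_sq_le (sqrt_nonneg _) (sqrt_nonneg _) ?_
  rw [sq_sqrt (by positivity), sq_sqrt (by positivity)]
  have h1 := gaussProfile_sq_sub_le hx hxc hc
  have h2 := le_gaussProfile_sq_add hx hxc hc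
  have h3 : gaussProfile (c - x) ^ 2 ≤ gaussProfile (c + x) ^ 2 :=
    pow_le_pow_left₀ (gaussProfile_pos _).le
      (normalDensity_le_of_abs_le (abs_PhiInv_add_le hx hxc hc)) 2
  have h4 : (gaussProfile (c + x) ^ 2 - gaussProfile (c - x) ^ 2) ^ 2
      ≤ (-4 * PhiInv c * gaussProfile c * x) ^ 2 := pow_le_pow_left₀ (by linarith) h1 2
  have h5 := mul_le_mul_of_nonneg_left h2 (by positivity : 0 ≤ 8 * gaussProfile c ^ 2)
  nlinarith

end TwoPoint

/-- Bobkov's two-point inequality. -/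
lemma gaussProfile_two_point {a b : ℝ} (ha : a ∈ Ioo (0 : ℝ) 1) (hb : b ∈ Ioo (0 : ℝ) 1) :
    2 * gaussProfile ((a + b) / 2) ≤
      √(gaussProfile a ^ 2 + ((a - b) / 2) ^ 2) + √(gaussProfile b ^ 2 + ((a - b) / 2) ^ 2) := by
  wlog hab : b ≤ a generalizing a b
  · have := this hb ha (le_of_not_ge hab)
    rw [add_comm b a, add_comm (√_)] at this
    convert this using 4 <;> ring
  wlog hc : (a + b) / 2 ≤ 1 / 2 generalizing a b
  · have ha' : 1 - a ∈ Ioo (0 : ℝ) 1 := ⟨by linarith [ha.2], by linarith [ha.1]⟩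
    have hb' : 1 - b ∈ Ioo (0 : ℝ) 1 := ⟨by linarith [hb.2], by linarith [hb.1]⟩
    have := this hb' ha' (by linarith) (by linarith)
    rw [gaussProfile_one_sub ha, gaussProfile_one_sub hb, add_comm (√_),
      show (1 - b + (1 - a)) / 2 = 1 - (a + b) / 2 by ring, gaussProfile_one_sub
        ⟨by linarith [ha.1, hb.1], by linarith [ha.2, hb.2]⟩] at this
    convert this using 4 <;> ring
  have := two_mul_gaussProfile_le (c := (a + b) / 2) (x := (a - b) / 2) (by linarith)
    (by linarith [hb.1]) hc
  rwa [show (a + b) / 2 + (a - b) / 2 = a by ring, show (a + b) / 2 - (a - b) / 2 = b by ring]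
    at this

/-! ### Bobkov's inequality on the discrete cube -/

section Cube

open Finset Fintype
open scoped BigOperators

lemma sqrt_expect_sq_add_le {α : Type*} [Fintype α] (X Y : α → ℝ) :
    √((𝔼 x, X x) ^ 2 + (𝔼 x, Y x) ^ 2) ≤ 𝔼 x, √(X x ^ 2 + Y x ^ 2) := by
  simp only [← Complex.norm_add_mul_I, Fintype.expect_eq_sum_div_card]
  have h : ((∑ x, X x) / card α : ℝ) + ((∑ x, Y x) / card α : ℝ) * Complex.I
      = (∑ x, ((X x : ℂ) + Y x * Complex.I)) / card α := by
    push_cast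
    rw [Finset.sum_add_distrib, ← Finset.sum_mul]
    ring
  rw [h, norm_div, Complex.norm_natCast]
  gcongr
  exact norm_sum_le _ _

lemma expect_cons {n : ℕ} (F : (Fin (n + 1) → Bool) → ℝ) :
    𝔼 x, F x = (𝔼 y, F (Fin.cons true y) + 𝔼 y, F (Fin.cons false y)) / 2 := by
  rw [← Fintype.expect_equiv (Fin.consEquiv fun _ ↦ Bool) (fun p ↦ F (Fin.cons p.1 p.2)) F
    (fun _ ↦ rfl), ← Finset.univ_product_univ, Finset.expect_product]
  simp [Finset.expect_eq_sum_div_card]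

/-- Bobkov's inequality on the discrete cube, by tensorization of the two-point inequality. -/
lemma gaussProfile_expect_le {n : ℕ} (f : (Fin n → Bool) → ℝ) (hf : ∀ x, f x ∈ Ioo (0 : ℝ) 1) :
    gaussProfile (𝔼 x, f x) ≤ 𝔼 x, √(gaussProfile (f x) ^ 2 +
      ∑ i, ((f (Function.update x i true) - f (Function.update x i false)) / 2) ^ 2) := by
  induction n with
  | zero => simp [sqrt_sq (gaussProfile_pos _).le]
  | succ n ih =>
    have hmem (b : Bool) : 𝔼 y, f (Fin.cons b y) ∈ Ioo (0 : ℝ) 1 :=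
      ⟨expect_pos (fun y _ ↦ (hf _).1) univ_nonempty,
        by
          rw [Fintype.expect_eq_sum_div_card, div_lt_one (by positivity)]
          exact (sum_lt_sum_of_nonempty univ_nonempty fun y _ ↦ (hf (Fin.cons b y)).2).trans_eq
            (by simp)⟩
    rw [expect_cons f, expect_cons]
    have key (b : Bool) :
        √(gaussProfile (𝔼 y, f (Fin.cons b y)) ^ 2 +
          ((𝔼 y, f (Fin.cons true y) - 𝔼 y, f (Fin.cons false y)) / 2) ^ 2) ≤
        𝔼 y, √(gaussProfile (f (Fin.cons b y)) ^ 2 +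
          ∑ i, ((f (Function.update (Fin.cons b y : Fin (n + 1) → Bool) i true) -
            f (Function.update (Fin.cons b y : Fin (n + 1) → Bool) i false)) / 2) ^ 2) := by
      have h1 : (𝔼 y, f (Fin.cons true y) - 𝔼 y, f (Fin.cons false y)) / 2
          = 𝔼 y, (f (Fin.cons true y) - f (Fin.cons false y)) / 2 := by
        rw [← Finset.expect_div, Finset.expect_sub_distrib]
      rw [h1]
      refine (sqrt_le_sqrt (add_le_add_left (pow_le_pow_left₀ (gaussProfile_pos _).le
        (ih (fun y ↦ f (Fin.cons b y)) fun y ↦ hf _) 2) _)).trans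
        ((sqrt_expect_sq_add_le _ _).trans_eq ?_)
      refine Finset.expect_congr rfl fun y _ ↦ ?_
      rw [sq_sqrt (by positivity), Fin.sum_univ_succ]
      simp only [Fin.update_cons_zero, Fin.cons_update]
      congr 1
      ring
    have := gaussProfile_two_point (hmem true) (hmem false)
    linarith [key true, key false]

end Cube

/-! ### Gaussian approximation by random walks -/

instance isProbabilityMeasure_stdGaussian (d : ℕ) : IsProbabilityMeasure (_root_.stdGaussian d) := by
  unfold _root_.stdGaussian; infer_instance

/-- The uniform measure on `Bool`. -/
noncomputable def fairCoin : Measure Bool := (2⁻¹ : ENNReal) • Measure.count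

lemma fairCoin_singleton (b : Bool) : fairCoin {b} = 2⁻¹ := by simp [fairCoin]

instance isProbabilityMeasure_fairCoin : IsProbabilityMeasure fairCoin where
  measure_univ := by
    rw [← Set.toFinite univ |>.coe_toFinset, ← sum_measure_singleton]
    simp [fairCoin_singleton, ENNReal.mul_inv_cancel]

/-- The sign of a coin flip. -/
def coinSign (b : Bool) : ℝ := if b then 1 else -1

/-- The normalized endpoint of the simple random walk with the given steps. -/
noncomputable def walkEnd (m : ℕ) (x : Fin m → Bool) : ℝ := (√m)⁻¹ * ∑ k, coinSign (x k)

/-- The law of the normalized simple random walk. -/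
noncomputable def walkLaw (m : ℕ) : ProbabilityMeasure ℝ :=
  ⟨(Measure.pi fun _ : Fin m ↦ fairCoin).map (walkEnd m),
    Measure.isProbabilityMeasure_map (measurable_of_finite _).aemeasurable⟩

lemma charFun_walkLaw (m : ℕ) (t : ℝ) :
    charFun (walkLaw m : Measure ℝ) t = charFun (fairCoin.map coinSign) ((√m)⁻¹ * t) ^ m := by
  have hind : iIndepFun (fun (k : Fin m) (x : Fin m → Bool) ↦ coinSign (x k))
      (Measure.pi fun _ : Fin m ↦ fairCoin) :=
    iIndepFun_pi fun _ ↦ (measurable_of_finite coinSign).aemeasurable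
  have hlaw (k : Fin m) : (Measure.pi fun _ : Fin m ↦ fairCoin).map (fun x ↦ coinSign (x k))
      = fairCoin.map coinSign := by
    have hc : Measurable coinSign := measurable_of_finite coinSign
    have he := measurePreserving_eval (fun _ : Fin m ↦ fairCoin) k
    rw [← he.map_eq, Measure.map_map hc he.measurable, he.map_eq]
    rfl
  change charFun ((Measure.pi fun _ : Fin m ↦ fairCoin).map
    (fun x ↦ (√m)⁻¹ * ∑ k, coinSign (x k))) t = _
  rw [charFun_map_mul_comp (measurable_of_finite _).aemeasurable,
    hind.charFun_map_fun_sum_eq_prod (fun _ ↦ (measurable_of_finite _).aemeasurable)]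
  simp [hlaw]

lemma integral_fairCoin (g : Bool → ℝ) : ∫ b, g b ∂fairCoin = (g true + g false) / 2 := by
  rw [integral_fintype (.of_finite)]
  simp [Measure.real, fairCoin_singleton]
  ring

lemma tendsto_walkLaw :
    Tendsto walkLaw atTop (𝓝 (⟨gaussianReal 0 1, inferInstance⟩ : ProbabilityMeasure ℝ)) := by
  refine ProbabilityMeasure.tendsto_iff_tendsto_charFun.2 fun t ↦ ?_
  simp only [charFun_walkLaw]
  have := tendsto_charFun_inv_sqrt_mul_pow (P := fairCoin) (X := coinSign)
    (measurable_of_finite _).aemeasurable (by simp [integral_fairCoin, coinSign])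
    (by rw [integral_fairCoin]; simp [coinSign]) t
  simpa [charFun_gaussianReal, neg_div] using this

open scoped BigOperators in
lemma integral_pi_walkLaw {d m : ℕ} {F : (Fin d → ℝ) → ℝ} (hF : Continuous F) :
    ∫ z, F z ∂(Measure.pi fun _ : Fin d ↦ (walkLaw m : Measure ℝ)) =
      𝔼 x : Fin d → Fin m → Bool, F fun j ↦ walkEnd m (x j) := by
  have h : (Measure.pi fun _ : Fin d ↦ (walkLaw m : Measure ℝ)) =
      (Measure.pi fun _ : Fin d ↦ Measure.pi fun _ : Fin m ↦ fairCoin).map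
        fun x j ↦ walkEnd m (x j) := by
    have (j : Fin d) : SigmaFinite ((Measure.pi fun _ : Fin m ↦ fairCoin).map (walkEnd m)) :=
      inferInstanceAs (SigmaFinite (walkLaw m : Measure ℝ))
    exact (Measure.pi_map_pi fun _ ↦ (measurable_of_finite _).aemeasurable).symm
  rw [h, integral_map (measurable_of_finite _).aemeasurable hF.aestronglyMeasurable,
    integral_fintype .of_finite, Fintype.expect_eq_sum_div_card, Finset.sum_div]
  refine Finset.sum_congr rfl fun x _ ↦ ?_
  simp only [Measure.real, Measure.pi_singleton, fairCoin_singleton, smul_eq_mul]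
  simp
  ring

open scoped BigOperators in
lemma tendsto_expect_walkEnd {d : ℕ} {F : (Fin d → ℝ) → ℝ} (hF : Continuous F) {M : ℝ}
    (hM : ∀ z, |F z| ≤ M) :
    Tendsto (fun m ↦ 𝔼 x : Fin d → Fin m → Bool, F fun j ↦ walkEnd m (x j)) atTop
      (𝓝 (∫ z, F z ∂_root_.stdGaussian d)) := by
  have h1 : Tendsto (fun m ↦ ProbabilityMeasure.pi fun _ : Fin d ↦ walkLaw m) atTop
      (𝓝 (ProbabilityMeasure.pi fun _ : Fin d ↦ ⟨gaussianReal 0 1, inferInstance⟩)) :=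
    (ProbabilityMeasure.continuous_pi.tendsto _).comp
      (tendsto_pi_nhds.2 fun _ ↦ tendsto_walkLaw)
  have h2 := ProbabilityMeasure.tendsto_iff_forall_integral_tendsto.1 h1
    (BoundedContinuousFunction.ofNormedAddCommGroup F hF M hM)
  simp only [BoundedContinuousFunction.coe_ofNormedAddCommGroup, ProbabilityMeasure.toMeasure_pi,
    integral_pi_walkLaw hF] at h2
  exact h2

open scoped BigOperators in
lemma gaussProfile_expect_curry_le {d m : ℕ} (f : (Fin d → Fin m → Bool) → ℝ)
    (hf : ∀ x, f x ∈ Ioo (0 : ℝ) 1) :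
    gaussProfile (𝔼 x, f x) ≤ 𝔼 x, √(gaussProfile (f x) ^ 2 +
      ∑ j, ∑ k, ((f (Function.update x j (Function.update (x j) k true)) -
        f (Function.update x j (Function.update (x j) k false))) / 2) ^ 2) := by
  let e : (Fin d → Fin m → Bool) ≃ (Fin (d * m) → Bool) :=
    (Equiv.curry (Fin d) (Fin m) Bool).symm.trans (finProdFinEquiv.arrowCongr (Equiv.refl Bool))
  have he (x) (j : Fin d) (k : Fin m) (b : Bool) :
      e (Function.update x j (Function.update (x j) k b)) =
        Function.update (e x) (finProdFinEquiv (j, k)) b := by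
    ext i
    obtain ⟨⟨j', k'⟩, rfl⟩ := finProdFinEquiv.surjective i
    simp only [e, Equiv.trans_apply, Equiv.arrowCongr_apply, Equiv.coe_refl, Function.comp_apply,
      Equiv.symm_apply_apply, Equiv.curry_symm_apply, Function.uncurry_apply_pair,
      Function.update_apply, EmbeddingLike.apply_eq_iff_eq, Prod.mk.injEq, id]
    by_cases hj : j' = j
    · subst hj
      by_cases hk : k' = k <;> simp [hk]
    · simp [hj]
  have h := gaussProfile_expect_le (fun y ↦ f (e.symm y)) fun y ↦ hf _
  rw [← Fintype.expect_equiv e f (fun y ↦ f (e.symm y)) (fun x ↦ by simp),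
    ← Fintype.expect_equiv e _ _ (fun x ↦ rfl)] at h
  refine h.trans_eq (Finset.expect_congr rfl fun x _ ↦ ?_)
  rw [← finProdFinEquiv.sum_comp, Fintype.sum_prod_type]
  simp only [← he, Equiv.symm_apply_apply]

/-! ### Bobkov's functional inequality for the Gaussian measure -/

lemma integral_mem_Ioo {Ω : Type*} [MeasurableSpace Ω] {μ : Measure Ω} [IsProbabilityMeasure μ]
    {f : Ω → ℝ} (hf : ∀ z, f z ∈ Ioo (0 : ℝ) 1) (hint : Integrable f μ) :
    ∫ z, f z ∂μ ∈ Ioo (0 : ℝ) 1 := by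
  have pos {g : Ω → ℝ} (hg : ∀ z, 0 < g z) (hi : Integrable g μ) : 0 < ∫ z, g z ∂μ := by
    rw [integral_pos_iff_support_of_nonneg (fun z ↦ (hg z).le) hi,
      show Function.support g = univ from eq_univ_of_forall fun z ↦ (hg z).ne']
    simp
  refine ⟨pos (fun z ↦ (hf z).1) hint, ?_⟩
  have := pos (g := fun z ↦ 1 - f z) (fun z ↦ sub_pos.2 (hf z).2) ((integrable_const 1).sub hint)
  rw [integral_sub (integrable_const 1) hint] at this
  simpa using this

/-- The maximum of `|g|` on the interval of radius `ω` around `a`. -/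
noncomputable def localMax (g : ℝ → ℝ) (a ω : ℝ) : ℝ :=
  sSup ((fun s ↦ |g (a + s)|) '' Icc (-ω) ω)

section LocalMax

variable {g : ℝ → ℝ} {a ω M : ℝ}

lemma abs_le_localMax (hM : ∀ x, |g x| ≤ M) {x : ℝ} (hx : x ∈ Icc (a - ω) (a + ω)) :
    |g x| ≤ localMax g a ω := by
  refine le_csSup ⟨M, ?_⟩ ⟨x - a, ⟨by linarith [hx.1], by linarith [hx.2]⟩, by simp⟩
  rintro _ ⟨s, _, rfl⟩
  exact hM _

lemma localMax_le {C : ℝ} (hω : 0 ≤ ω) (hC : ∀ s ∈ Icc (-ω) ω, |g (a + s)| ≤ C) :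
    localMax g a ω ≤ C := by
  refine csSup_le ((nonempty_Icc.2 (by linarith)).image _) ?_
  rintro _ ⟨s, hs, rfl⟩
  exact hC s hs

lemma localMax_nonneg (hω : 0 ≤ ω) (hM : ∀ x, |g x| ≤ M) : 0 ≤ localMax g a ω :=
  (abs_nonneg _).trans (abs_le_localMax hM (x := a) ⟨by linarith, by linarith⟩)

lemma tendsto_localMax (hg : ContinuousAt g a) (hM : ∀ x, |g x| ≤ M) {w : ℕ → ℝ}
    (hw0 : ∀ n, 0 ≤ w n) (hw : Tendsto w atTop (𝓝 0)) :
    Tendsto (fun n ↦ localMax g a (w n)) atTop (𝓝 |g a|) := by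
  refine tendsto_order.2 ⟨fun b hb ↦ .of_forall fun n ↦ hb.trans_le
    (abs_le_localMax hM ⟨by linarith [hw0 n], by linarith [hw0 n]⟩), fun b hb ↦ ?_⟩
  obtain ⟨c, hc, hcb⟩ := exists_between hb
  obtain ⟨δ, hδ, h⟩ := Metric.eventually_nhds_iff.1 (hg.abs.eventually_lt_const hc)
  filter_upwards [hw.eventually_lt_const hδ] with n hn
  refine (localMax_le (hw0 n) fun s hs ↦ (h ?_).le).trans_lt hcb
  rw [Real.dist_eq, add_sub_cancel_left, abs_lt]
  exact ⟨by linarith [hs.1], by linarith [hs.2]⟩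

end LocalMax

section Bobkov

variable {d : ℕ} {f : (Fin d → ℝ) → ℝ} {p : Fin d → (Fin d → ℝ) → ℝ} {M : ℝ}

lemma abs_update_sub_update_le
    (hp : ∀ j z, HasDerivAt (fun t ↦ f (Function.update z j t)) (p j z) (z j))
    (hM : ∀ j z, |p j z| ≤ M) {ω : ℝ} (z : Fin d → ℝ) (j : Fin d) {a b : ℝ}
    (ha : a ∈ Icc (z j - ω) (z j + ω)) (hb : b ∈ Icc (z j - ω) (z j + ω)) :
    |f (Function.update z j a) - f (Function.update z j b)| ≤
      localMax (fun t ↦ p j (Function.update z j t)) (z j) ω * |a - b| := by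
  refine Convex.norm_image_sub_le_of_norm_hasDerivWithin_le
    (f := fun t ↦ f (Function.update z j t)) (f' := fun t ↦ p j (Function.update z j t))
    (fun t _ ↦ ?_) (fun t ht ↦ abs_le_localMax (fun x ↦ hM _ _) ht) (convex_Icc _ _) hb ha
  have := hp j (Function.update z j t)
  simp only [Function.update_idem, Function.update_self] at this
  exact this.hasDerivWithinAt

lemma continuous_localMax_update (hp : ∀ j, Continuous (p j)) (j : Fin d) (ω : ℝ) :
    Continuous fun z ↦ localMax (fun t ↦ p j (Function.update z j t)) (z j) ω := by
  refine IsCompact.continuous_sSup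
    (f := fun z s ↦ |p j (Function.update z j (z j + s))|) isCompact_Icc ?_
  simp only [Function.HasUncurry.uncurry, id]
  exact ((hp j).comp (continuous_fst.update j (by fun_prop))).abs

lemma abs_walkEnd_update_sub_le {m : ℕ} (x : Fin m → Bool) (k : Fin m) (b : Bool) :
    |walkEnd m (Function.update x k b) - walkEnd m x| ≤ 2 * (√m)⁻¹ := by
  have h : ∑ i, coinSign (Function.update x k b i) - ∑ i, coinSign (x i)
      = coinSign b - coinSign (x k) := by
    rw [← Finset.sum_sub_distrib, Finset.sum_eq_single k]
    · simp
    · intro i _ hi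
      simp [hi]
    · simp
  rw [walkEnd, walkEnd, ← mul_sub, h, abs_mul, abs_of_nonneg (by positivity), mul_comm]
  gcongr
  cases b <;> cases x k <;> norm_num [coinSign]

lemma abs_walkEnd_update_sub {m : ℕ} (x : Fin m → Bool) (k : Fin m) :
    |walkEnd m (Function.update x k true) - walkEnd m (Function.update x k false)|
      ≤ 2 * (√m)⁻¹ := by
  simpa using abs_walkEnd_update_sub_le (Function.update x k false) k true

open scoped BigOperators in
lemma gaussProfile_expect_walkEnd_le (hf : ∀ z, f z ∈ Ioo (0 : ℝ) 1)
    (hp : ∀ j z, HasDerivAt (fun t ↦ f (Function.update z j t)) (p j z) (z j))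
    (hM : ∀ j z, |p j z| ≤ M) {ω : ℝ} (hω : 0 ≤ ω) {m : ℕ} (hm : 2 * (√m)⁻¹ ≤ ω) :
    gaussProfile (𝔼 x : Fin d → Fin m → Bool, f fun j ↦ walkEnd m (x j)) ≤
      𝔼 x : Fin d → Fin m → Bool, (fun z ↦ √(gaussProfile (f z) ^ 2 +
        ∑ j, localMax (fun t ↦ p j (Function.update z j t)) (z j) ω ^ 2))
          (fun j ↦ walkEnd m (x j)) := by
  refine (gaussProfile_expect_curry_le _ fun x ↦ hf _).trans
    (Finset.expect_le_expect fun x _ ↦ sqrt_le_sqrt ?_)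
  gcongr with j
  set z : Fin d → ℝ := fun j ↦ walkEnd m (x j)
  set h := localMax (fun t ↦ p j (Function.update z j t)) (z j) ω
  have hz (k : Fin m) (b : Bool) :
      (fun i ↦ walkEnd m (Function.update x j (Function.update (x j) k b) i)) =
        Function.update z j (walkEnd m (Function.update (x j) k b)) := by
    ext i
    by_cases hi : i = j
    · subst hi; simp
    · simp [hi, z]
  have hstep (k : Fin m) :
      ((f (fun i ↦ walkEnd m (Function.update x j (Function.update (x j) k true) i)) -
        f (fun i ↦ walkEnd m (Function.update x j (Function.update (x j) k false) i))) / 2) ^ 2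
      ≤ h ^ 2 * (m : ℝ)⁻¹ := by
    have hb (b : Bool) :
        walkEnd m (Function.update (x j) k b) ∈ Icc (z j - ω) (z j + ω) := by
      have := abs_le.1 ((abs_walkEnd_update_sub_le (x j) k b).trans hm)
      exact ⟨by linarith [this.1], by linarith [this.2]⟩
    have h0 : 0 ≤ h := localMax_nonneg hω fun t ↦ hM j _
    have h1 := (abs_update_sub_update_le hp hM z j (hb true) (hb false)).trans
      (mul_le_mul_of_nonneg_left (abs_walkEnd_update_sub (x j) k) h0)
    rw [hz, hz, ← sq_abs, abs_div, abs_two]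
    refine (pow_le_pow_left₀ (by positivity) (div_le_div_of_nonneg_right h1 two_pos.le) 2).trans_eq
      ?_
    rw [show h * (2 * (√m)⁻¹) / 2 = h * (√m)⁻¹ by ring, mul_pow, inv_pow, sq_sqrt (by positivity)]
  refine (Finset.sum_le_sum fun k _ ↦ hstep k).trans ?_
  rcases m.eq_zero_or_pos with rfl | hm0
  · simp [sq_nonneg]
  · rw [Finset.sum_const, Finset.card_univ, Fintype.card_fin, nsmul_eq_mul]
    apply le_of_eq
    field_simp

lemma continuous_gaussProfile_comp (hfc : Continuous f) (hf : ∀ z, f z ∈ Ioo (0 : ℝ) 1) :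
    Continuous fun z ↦ gaussProfile (f z) :=
  continuousOn_gaussProfile.comp_continuous hfc hf

lemma sqrt_gaussProfile_sq_add_le {y : ℝ} {q : Fin d → ℝ} (hq : ∀ j, |q j| ≤ M) :
    |√(gaussProfile y ^ 2 + ∑ j, q j ^ 2)| ≤ √(normalDensity 0 ^ 2 + d * M ^ 2) := by
  rw [abs_of_nonneg (sqrt_nonneg _)]
  refine sqrt_le_sqrt (add_le_add
    (pow_le_pow_left₀ (gaussProfile_pos _).le (normalDensity_le_zero_apply _) 2) ?_)
  refine (Finset.sum_le_sum fun j _ ↦ sq_le_sq.2 ((hq j).trans (le_abs_self M))).trans_eq ?_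
  simp

/-- Bobkov's functional inequality for the standard Gaussian measure. -/
lemma gaussProfile_integral_le (hf : ∀ z, f z ∈ Ioo (0 : ℝ) 1) (hfc : Continuous f)
    (hp : ∀ j z, HasDerivAt (fun t ↦ f (Function.update z j t)) (p j z) (z j))
    (hpc : ∀ j, Continuous (p j)) (hM : ∀ j z, |p j z| ≤ M) :
    gaussProfile (∫ z, f z ∂_root_.stdGaussian d) ≤
      ∫ z, √(gaussProfile (f z) ^ 2 + ∑ j, p j z ^ 2) ∂_root_.stdGaussian d := by
  have hf1 (z) : |f z| ≤ 1 := abs_le.2 ⟨by linarith [(hf z).1], (hf z).2.le⟩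
  have hmem := integral_mem_Ioo (μ := _root_.stdGaussian d) hf
    (.of_bound hfc.aestronglyMeasurable 1 (.of_forall hf1))
  set G : ℝ → (Fin d → ℝ) → ℝ := fun ω z ↦ √(gaussProfile (f z) ^ 2 +
    ∑ j, localMax (fun t ↦ p j (Function.update z j t)) (z j) ω ^ 2)
  have hGc (ω) : Continuous (G ω) :=
    (((continuous_gaussProfile_comp hfc hf).pow 2).add
      (continuous_finsetSum _ fun j _ ↦ (continuous_localMax_update hpc j ω).pow 2)).sqrt
  have hGM (ω) (hω : 0 ≤ ω) (z) : |G ω z| ≤ √(normalDensity 0 ^ 2 + d * M ^ 2) :=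
    sqrt_gaussProfile_sq_add_le fun j ↦ by
      rw [abs_of_nonneg (localMax_nonneg hω fun t ↦ hM j _)]
      exact localMax_le hω fun s _ ↦ hM _ _
  have hstep (ω : ℝ) (hω : 0 < ω) :
      gaussProfile (∫ z, f z ∂_root_.stdGaussian d) ≤ ∫ z, G ω z ∂_root_.stdGaussian d := by
    refine le_of_tendsto_of_tendsto
      (((continuousOn_gaussProfile.continuousAt (Ioo_mem_nhds hmem.1 hmem.2)).tendsto).comp
        (tendsto_expect_walkEnd hfc hf1))
      (tendsto_expect_walkEnd (hGc ω) (hGM ω hω.le)) ?_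
    have hlim : Tendsto (fun m : ℕ ↦ 2 * (√m)⁻¹) atTop (𝓝 0) := by
      simpa using (tendsto_inv_atTop_zero.comp
        (tendsto_sqrt_atTop.comp tendsto_natCast_atTop_atTop)).const_mul (2 : ℝ)
    filter_upwards [hlim.eventually_le_const hω] with m hm
    exact gaussProfile_expect_walkEnd_le hf hp hM hω.le hm
  have hpos (n : ℕ) : 0 < 1 / ((n : ℝ) + 1) := by positivity
  refine ge_of_tendsto' (tendsto_integral_of_dominated_convergence
    (F := fun n : ℕ ↦ G (1 / ((n : ℝ) + 1))) (fun _ ↦ √(normalDensity 0 ^ 2 + d * M ^ 2))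
    (fun n ↦ (hGc _).aestronglyMeasurable) (integrable_const _)
    (fun n ↦ .of_forall (hGM _ (hpos n).le)) (.of_forall fun z ↦ ?_)) fun n ↦ hstep _ (hpos n)
  refine ((tendsto_finsetSum _ fun j _ ↦ ?_).const_add _).sqrt
  have hcont : ContinuousAt (fun t ↦ p j (Function.update z j t)) (z j) :=
    ((hpc j).comp (continuous_const.update j continuous_id)).continuousAt
  have := (tendsto_localMax hcont (fun t ↦ hM j _) (fun n ↦ (hpos n).le)
    tendsto_one_div_add_atTop_nhds_zero_nat).pow 2
  simpa only [Function.update_eq_self, sq_abs] using this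

end Bobkov

/-! ### Enlargement inequality for smooth Lipschitz functions -/

lemma l2_eq_norm {d : ℕ} (z : Fin d → ℝ) : l2 z = ‖WithLp.toLp 2 z‖ := by
  simp [l2, EuclideanSpace.norm_eq]

lemma l2_nonneg {d : ℕ} (z : Fin d → ℝ) : 0 ≤ l2 z := sqrt_nonneg _

lemma l2_zero {d : ℕ} : l2 (0 : Fin d → ℝ) = 0 := by simp [l2]

lemma l2_smul {d : ℕ} (c : ℝ) (z : Fin d → ℝ) : l2 (c • z) = |c| * l2 z := by
  rw [l2_eq_norm, l2_eq_norm, WithLp.toLp_smul, norm_smul, Real.norm_eq_abs]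

lemma l2_add_le {d : ℕ} (x y : Fin d → ℝ) : l2 (x + y) ≤ l2 x + l2 y := by
  simp only [l2_eq_norm, WithLp.toLp_add]
  exact norm_add_le _ _

lemma l2_le_mul_norm {d : ℕ} (z : Fin d → ℝ) : l2 z ≤ d * ‖z‖ := by
  refine sqrt_le_iff.2 ⟨by positivity, ?_⟩
  calc ∑ i, z i ^ 2 ≤ ∑ _i : Fin d, ‖z‖ ^ 2 := Finset.sum_le_sum fun i _ ↦ by
        rw [← sq_abs]
        exact pow_le_pow_left₀ (abs_nonneg _) (norm_le_pi_norm z i) 2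
    _ = d * ‖z‖ ^ 2 := by simp
    _ ≤ (d * ‖z‖) ^ 2 := by
        rw [mul_pow]
        gcongr
        exact_mod_cast Nat.le_self_pow two_ne_zero d

section Smooth

variable {d : ℕ} {D : (Fin d → ℝ) → ℝ}

lemma continuous_of_abs_sub_le_l2 (hL : ∀ x y, |D x - D y| ≤ l2 (x - y)) : Continuous D := by
  refine (LipschitzWith.of_dist_le_mul (K := d) fun x y ↦ ?_).continuous
  rw [Real.dist_eq, dist_eq_norm]
  exact (hL x y).trans (l2_le_mul_norm _)

lemma sum_sq_fderiv_single_le_one {z : Fin d → ℝ} (hD : DifferentiableAt ℝ D z)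
    (hL : ∀ x y, |D x - D y| ≤ l2 (x - y)) :
    ∑ j, fderiv ℝ D z (Pi.single j 1) ^ 2 ≤ 1 := by
  set v : Fin d → ℝ := fun j ↦ fderiv ℝ D z (Pi.single j 1)
  have hv : fderiv ℝ D z v = ∑ j, v j ^ 2 := by
    have := (fderiv ℝ D z).toLinearMap.pi_apply_eq_sum_univ v
    simp only [ContinuousLinearMap.coe_coe] at this
    rw [this]
    refine Finset.sum_congr rfl fun j _ ↦ ?_
    rw [smul_eq_mul, sq]
    congr 2
    ext i
    simp [Pi.single_apply, eq_comm]
  have hdir : HasDerivAt (fun t : ℝ ↦ D (z + t • v)) (fderiv ℝ D z v) 0 := by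
    have h1 : HasDerivAt (fun t : ℝ ↦ z + t • v) v 0 := by
      simpa using ((hasDerivAt_id (0 : ℝ)).smul_const v).const_add z
    exact HasFDerivAt.comp_hasDerivAt 0 (by simpa using hD.hasFDerivAt) h1
  have hle := hdir.le_of_lip' (l2_nonneg v) (.of_forall fun t ↦ by
    rw [Real.norm_eq_abs, sub_zero, Real.norm_eq_abs, mul_comm, ← l2_smul]
    simpa using hL (z + t • v) (z + (0 : ℝ) • v))
  rw [hv, Real.norm_eq_abs] at hle
  have h0 : 0 ≤ ∑ j, v j ^ 2 := by positivity
  have h1 : ∑ j, v j ^ 2 ≤ √(∑ j, v j ^ 2) := (le_abs_self _).trans hle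
  nlinarith [sq_sqrt h0, sqrt_nonneg (∑ j, v j ^ 2)]

/-- Gaussian average of the smoothed indicator `Phi (l * (s - D z))` of `{D ≤ s}`. -/
noncomputable def smoothedCDF (D : (Fin d → ℝ) → ℝ) (l s : ℝ) : ℝ :=
  ∫ z, Phi (l * (s - D z)) ∂_root_.stdGaussian d

lemma integrable_Phi_comp {Ω : Type*} [MeasurableSpace Ω] {μ : Measure Ω} [IsProbabilityMeasure μ]
    {g : Ω → ℝ} (hg : Measurable g) : Integrable (fun z ↦ Phi (g z)) μ :=
  .of_bound (continuous_Phi.measurable.comp hg).aestronglyMeasurable 1 <| .of_forall fun _ ↦ by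
    rw [Real.norm_eq_abs, abs_of_pos (Phi_pos _)]
    exact (Phi_lt_one _).le

lemma smoothedCDF_mem_Ioo (hDc : Continuous D) (l s : ℝ) : smoothedCDF D l s ∈ Ioo (0 : ℝ) 1 :=
  integral_mem_Ioo (fun _ ↦ ⟨Phi_pos _, Phi_lt_one _⟩)
    (integrable_Phi_comp (by fun_prop))

lemma hasDerivAt_smoothedCDF (hDc : Continuous D) {l : ℝ} (hl : 0 < l) (s : ℝ) :
    HasDerivAt (smoothedCDF D l)
      (∫ z, l * normalDensity (l * (s - D z)) ∂_root_.stdGaussian d) s := by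
  have hc := continuous_normalDensity
  refine (hasDerivAt_integral_of_dominated_loc_of_deriv_le (s := univ)
    (F := fun s z ↦ Phi (l * (s - D z))) (F' := fun s z ↦ l * normalDensity (l * (s - D z)))
    (bound := fun _ ↦ l * normalDensity 0) univ_mem
    (.of_forall fun s ↦ ?_) ?_ ?_ ?_ (integrable_const _) ?_).2
  · exact (integrable_Phi_comp (by fun_prop)).aestronglyMeasurable
  · exact integrable_Phi_comp (by fun_prop)
  · exact (by fun_prop : Continuous fun z ↦ l * normalDensity (l * (s - D z))).aestronglyMeasurable
  · refine .of_forall fun z t _ ↦ ?_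
    rw [Real.norm_eq_abs, abs_of_pos (mul_pos hl (normalDensity_pos _))]
    exact mul_le_mul_of_nonneg_left (normalDensity_le_zero_apply _) hl.le
  · refine .of_forall fun z t _ ↦ ?_
    have h := ((hasDerivAt_id t).sub_const (D z)).const_mul l
    rw [mul_one] at h
    have h' := (hasDerivAt_Phi (l * (t - D z))).comp t h
    rw [mul_comm] at h'
    exact h'

lemma gaussProfile_smoothedCDF_le (hD : ContDiff ℝ 1 D)
    (hL : ∀ x y, |D x - D y| ≤ l2 (x - y)) {l : ℝ} (hl : 0 < l) (s : ℝ) :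
    gaussProfile (smoothedCDF D l s) ≤
      √(1 + l ^ 2) * ∫ z, normalDensity (l * (s - D z)) ∂_root_.stdGaussian d := by
  have hDc := hD.continuous
  have hnc := continuous_normalDensity
  have hdiff (z) : DifferentiableAt ℝ D z := hD.differentiable one_ne_zero z
  have hsum (z) := sum_sq_fderiv_single_le_one (hdiff z) hL
  set q : Fin d → (Fin d → ℝ) → ℝ := fun j z ↦ fderiv ℝ D z (Pi.single j 1)
  have hqc (j) : Continuous (q j) := (hD.continuous_fderiv one_ne_zero).clm_apply continuous_const
  have hq1 (j z) : |q j z| ≤ 1 := by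
    rw [← sq_le_one_iff_abs_le_one]
    exact (Finset.single_le_sum (f := fun j ↦ q j z ^ 2) (fun _ _ ↦ sq_nonneg _)
      (Finset.mem_univ j)).trans (hsum z)
  have hb := gaussProfile_integral_le (d := d) (f := fun z ↦ Phi (l * (s - D z)))
    (p := fun j z ↦ normalDensity (l * (s - D z)) * (l * -q j z)) (M := normalDensity 0 * l)
    (fun _ ↦ ⟨Phi_pos _, Phi_lt_one _⟩) (continuous_Phi.comp (by fun_prop)) (fun j z ↦ ?_)
    (fun j ↦ by fun_prop) (fun j z ↦ ?_)
  · refine hb.trans ?_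
    rw [← integral_const_mul]
    have hi {g : (Fin d → ℝ) → ℝ} (hg : Continuous g) {C : ℝ} (hC : ∀ z, |g z| ≤ C) :
        Integrable g (_root_.stdGaussian d) :=
      .of_bound hg.aestronglyMeasurable C (.of_forall hC)
    have hpt (z) : √(gaussProfile (Phi (l * (s - D z))) ^ 2 +
        ∑ j, (normalDensity (l * (s - D z)) * (l * -q j z)) ^ 2) ≤
        √(1 + l ^ 2) * normalDensity (l * (s - D z)) := by
      have hn := (normalDensity_pos (l * (s - D z))).le
      refine sqrt_le_iff.2 ⟨by positivity, ?_⟩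
      rw [gaussProfile_Phi, mul_pow, sq_sqrt (by positivity)]
      have : ∑ j, (normalDensity (l * (s - D z)) * (l * -q j z)) ^ 2
          = normalDensity (l * (s - D z)) ^ 2 * l ^ 2 * ∑ j, q j z ^ 2 := by
        rw [Finset.mul_sum]
        exact Finset.sum_congr rfl fun j _ ↦ by ring
      rw [this]
      nlinarith [mul_le_mul_of_nonneg_left (hsum z)
        (by positivity : 0 ≤ normalDensity (l * (s - D z)) ^ 2 * l ^ 2)]
    have hbd (z) : √(1 + l ^ 2) * normalDensity (l * (s - D z)) ≤
        √(1 + l ^ 2) * normalDensity 0 :=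
      mul_le_mul_of_nonneg_left (normalDensity_le_zero_apply _) (sqrt_nonneg _)
    refine integral_mono (hi ?_ (C := √(1 + l ^ 2) * normalDensity 0) fun z ↦ ?_)
      (hi ?_ (C := √(1 + l ^ 2) * normalDensity 0) fun z ↦ ?_) hpt
    · simp only [gaussProfile_Phi]
      fun_prop
    · rw [abs_of_nonneg (sqrt_nonneg _)]
      exact (hpt z).trans (hbd z)
    · fun_prop
    · rw [abs_of_nonneg (mul_nonneg (sqrt_nonneg _) (normalDensity_pos _).le)]
      exact hbd z
  · have h1 : HasDerivAt (fun t ↦ D (Function.update z j t)) (q j z) (z j) :=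
      HasFDerivAt.comp_hasDerivAt (z j)
        (by simpa using (hdiff z).hasFDerivAt) (hasDerivAt_update z j (z j))
    have h2 := (h1.const_sub s).const_mul l
    have h3 := (hasDerivAt_Phi (l * (s - D (Function.update z j (z j))))).comp (z j) h2
    rw [Function.update_eq_self] at h3
    exact h3
  · rw [abs_mul, abs_mul, abs_neg, abs_of_pos (normalDensity_pos _), abs_of_pos hl]
    have := normalDensity_pos 0
    calc _ ≤ normalDensity 0 * (l * 1) := by
          gcongr
          exacts [normalDensity_le_zero_apply _, hq1 j z]
      _ = _ := by rw [mul_one]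

lemma PhiInv_smoothedCDF_add_le (hD : ContDiff ℝ 1 D)
    (hL : ∀ x y, |D x - D y| ≤ l2 (x - y)) {l : ℝ} (hl : 0 < l) {s t : ℝ} (hst : s ≤ t) :
    PhiInv (smoothedCDF D l s) + l / √(1 + l ^ 2) * (t - s) ≤ PhiInv (smoothedCDF D l t) := by
  have hder (s : ℝ) := (hasDerivAt_PhiInv (smoothedCDF_mem_Ioo hD.continuous l s)).comp s
    (hasDerivAt_smoothedCDF hD.continuous hl s)
  have := mul_sub_le_image_sub_of_le_deriv (f := PhiInv ∘ smoothedCDF D l)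
    (fun s ↦ (hder s).differentiableAt) (C := l / √(1 + l ^ 2)) (fun s ↦ ?_) hst
  · simp only [Function.comp_apply] at this
    linarith
  · rw [(hder s).deriv, integral_const_mul, ← gaussProfile]
    have h := gaussProfile_smoothedCDF_le hD hL hl s
    have hp := gaussProfile_pos (smoothedCDF D l s)
    rw [inv_mul_eq_div, div_le_div_iff₀ (by positivity) hp]
    nlinarith [mul_le_mul_of_nonneg_left h hl.le]

end Smooth

/-! ### Enlargement inequality for Lipschitz functions -/

section Lipschitz

open scoped Convolution

variable {d : ℕ} {D : (Fin d → ℝ) → ℝ}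

lemma exists_contDiff_abs_sub_le (hL : ∀ x y, |D x - D y| ≤ l2 (x - y)) {θ : ℝ} (hθ : 0 < θ) :
    ∃ E : (Fin d → ℝ) → ℝ, ContDiff ℝ 1 E ∧ (∀ x y, |E x - E y| ≤ l2 (x - y)) ∧
      ∀ x, |E x - D x| ≤ θ := by
  have hDc := continuous_of_abs_sub_le_l2 hL
  have hr : 0 < θ / (d + 1) := by positivity
  let φ : ContDiffBump (0 : Fin d → ℝ) := ⟨θ / (d + 1) / 2, θ / (d + 1), by positivity, by linarith⟩
  let E : (Fin d → ℝ) → ℝ := φ.normed volume ⋆[ContinuousLinearMap.lsmul ℝ ℝ, volume] D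
  have hint (x) : Integrable fun t ↦ φ.normed volume t * D (x - t) :=
    φ.hasCompactSupport_normed.convolutionExists_left_of_continuous_right
      (ContinuousLinearMap.lsmul ℝ ℝ) φ.continuous_normed.locallyIntegrable hDc x
  refine ⟨E, ?_, fun x y ↦ ?_, fun x ↦ ?_⟩
  · exact φ.hasCompactSupport_normed.contDiff_convolution_left _ (φ.contDiff_normed (n := 1))
      hDc.locallyIntegrable
  · have hE (x) : E x = ∫ t, φ.normed volume t * D (x - t) := rfl
    rw [hE, hE, ← integral_sub (hint x) (hint y)]
    have := norm_integral_le_of_norm_le (μ := volume)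
      (f := fun t ↦ φ.normed volume t * D (x - t) - φ.normed volume t * D (y - t))
      (g := fun t ↦ φ.normed volume t * l2 (x - y))
      (φ.integrable_normed.mul_const _) (.of_forall fun t ↦ ?_)
    · rwa [integral_mul_const, φ.integral_normed, one_mul] at this
    · rw [← mul_sub, Real.norm_eq_abs, abs_mul, abs_of_nonneg (φ.nonneg_normed t)]
      refine mul_le_mul_of_nonneg_left ?_ (φ.nonneg_normed t)
      simpa using hL (x - t) (y - t)
  · refine φ.dist_normed_convolution_le hDc.aestronglyMeasurable fun y hy ↦ ?_
    rw [Metric.mem_ball, dist_eq_norm] at hy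
    calc |D y - D x| ≤ d * ‖y - x‖ := (hL y x).trans (l2_le_mul_norm _)
      _ ≤ (d + 1) * (θ / (d + 1)) := by gcongr; linarith
      _ = θ := by field_simp

lemma measureReal_mul_le_smoothedCDF (hDc : Continuous D) {C : Set (Fin d → ℝ)}
    (hC : MeasurableSet C) {l r s : ℝ} (hl : 0 ≤ l) (hr : ∀ z ∈ C, D z + r ≤ s) :
    (_root_.stdGaussian d).real C * Phi (l * r) ≤ smoothedCDF D l s := by
  rw [← smul_eq_mul, ← integral_indicator_const _ hC]
  refine integral_mono ((integrable_const _).indicator hC)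
    (integrable_Phi_comp (by fun_prop)) fun z ↦ ?_
  by_cases hz : z ∈ C
  · rw [indicator_of_mem hz]
    exact strictMono_Phi.monotone (mul_le_mul_of_nonneg_left (by linarith [hr z hz]) hl)
  · rw [indicator_of_notMem hz]
    exact (Phi_pos _).le

lemma smoothedCDF_le_measureReal_add (hDc : Continuous D) {A : Set (Fin d → ℝ)}
    (hA : MeasurableSet A) {l r s : ℝ} (hl : 0 ≤ l) (hr : ∀ z ∉ A, s + r ≤ D z) :
    smoothedCDF D l s ≤ (_root_.stdGaussian d).real A + Phi (-(l * r)) := by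
  have h1 : (_root_.stdGaussian d).real A = ∫ z, A.indicator 1 z ∂_root_.stdGaussian d :=
    (integral_indicator_one hA).symm
  have hi : Integrable (A.indicator (1 : (Fin d → ℝ) → ℝ)) (_root_.stdGaussian d) :=
    (integrable_const 1).indicator hA
  have h2 : (_root_.stdGaussian d).real A + Phi (-(l * r)) =
      ∫ z, (A.indicator 1 z + Phi (-(l * r))) ∂_root_.stdGaussian d := by
    rw [integral_add hi (integrable_const _), h1]
    simp
  rw [h2]
  refine integral_mono (integrable_Phi_comp (by fun_prop)) (hi.add (integrable_const _)) fun z ↦ ?_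
  by_cases hz : z ∈ A
  · simp only [indicator_of_mem hz, Pi.one_apply]
    linarith [Phi_lt_one (l * (s - D z)), Phi_pos (-(l * r))]
  · simp only [indicator_of_notMem hz, zero_add]
    refine strictMono_Phi.monotone ?_
    have := mul_le_mul_of_nonneg_left (by linarith [hr z hz] : s - D z ≤ -r) hl
    linarith

lemma tendsto_div_sqrt_one_add_sq :
    Tendsto (fun l : ℝ ↦ l / √(1 + l ^ 2)) atTop (𝓝 1) := by
  have h : Tendsto (fun l : ℝ ↦ (√(l⁻¹ ^ 2 + 1))⁻¹) atTop (𝓝 1) := by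
    have := ((tendsto_inv_atTop_zero (𝕜 := ℝ)).pow 2).add_const 1
    simpa using this.sqrt.inv₀ (by simp)
  refine h.congr' ?_
  filter_upwards [eventually_gt_atTop 0] with l hl
  rw [show l⁻¹ ^ 2 + 1 = (1 + l ^ 2) / l ^ 2 by field_simp, sqrt_div (by positivity),
    sqrt_sq hl.le, inv_div]

variable {C : Set (Fin d → ℝ)}

lemma Phi_PhiInv_add_sub_le_measureReal (hL : ∀ x y, |D x - D y| ≤ l2 (x - y))
    (hC : MeasurableSet C) (hDC : ∀ z ∈ C, D z ≤ 0)
    (hp : (_root_.stdGaussian d).real C ∈ Ioo (0 : ℝ) 1) {θ η : ℝ} (hθ : 0 < θ)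
    (hη : 4 * θ ≤ η) :
    Phi (PhiInv ((_root_.stdGaussian d).real C) + (η - 4 * θ)) ≤
      (_root_.stdGaussian d).real {z | D z ≤ η} := by
  have hDc := continuous_of_abs_sub_le_l2 hL
  obtain ⟨E, hE, hEL, hED⟩ := exists_contDiff_abs_sub_le hL hθ
  set p := (_root_.stdGaussian d).real C
  have hA : MeasurableSet {z | D z ≤ η} := (isClosed_le hDc continuous_const).measurableSet
  have hfin (l : ℝ) (hl : 0 < l) : Phi (PhiInv (p * Phi (l * θ)) +
      l / √(1 + l ^ 2) * (η - 4 * θ)) ≤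
      (_root_.stdGaussian d).real {z | D z ≤ η} + Phi (-(l * θ)) := by
    have h1 := measureReal_mul_le_smoothedCDF hE.continuous hC (r := θ) (s := 2 * θ) hl.le
      fun z hz ↦ by linarith [hDC z hz, (abs_le.1 (hED z)).2]
    have h2 := smoothedCDF_le_measureReal_add hE.continuous hA (r := θ) (s := η - 2 * θ) hl.le
      fun z hz ↦ by
        have : η < D z := not_le.1 hz
        linarith [(abs_le.1 (hED z)).1]
    have h3 := PhiInv_smoothedCDF_add_le hE hEL hl (s := 2 * θ) (t := η - 2 * θ) (by linarith)
    have hm := smoothedCDF_mem_Ioo hE.continuous l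
    have h4 : PhiInv (p * Phi (l * θ)) ≤ PhiInv (smoothedCDF E l (2 * θ)) :=
      strictMonoOn_PhiInv.monotoneOn ⟨mul_pos hp.1 (Phi_pos _), h1.trans_lt (hm _).2⟩ (hm _) h1
    rw [show η - 2 * θ - 2 * θ = η - 4 * θ by ring] at h3
    calc _ ≤ Phi (PhiInv (smoothedCDF E l (η - 2 * θ))) :=
          strictMono_Phi.monotone (by linarith)
      _ = smoothedCDF E l (η - 2 * θ) := Phi_PhiInv (hm _)
      _ ≤ _ := h2
  have hlθ : Tendsto (fun l : ℝ ↦ l * θ) atTop atTop := tendsto_id.atTop_mul_const hθ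
  have hP : Tendsto (fun l ↦ p * Phi (l * θ)) atTop (𝓝 p) := by
    simpa using (tendsto_Phi_atTop.comp hlθ).const_mul p
  refine le_of_tendsto_of_tendsto
    ((continuous_Phi.tendsto _).comp (((continuousAt_PhiInv hp).tendsto.comp hP).add
      (tendsto_div_sqrt_one_add_sq.mul_const (η - 4 * θ))))
    ((tendsto_Phi_atBot.comp (tendsto_neg_atTop_atBot.comp hlθ)).const_add _)
    (by filter_upwards [eventually_gt_atTop 0] with l hl using hfin l hl) |>.trans' ?_ |>.trans_eq ?_
  · rw [one_mul]
  · rw [add_zero]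

/-- Gaussian isoperimetry: enlarging a set by `η` increases `PhiInv` of its measure by at
least `η`. -/
lemma Phi_PhiInv_add_le_measureReal (hL : ∀ x y, |D x - D y| ≤ l2 (x - y))
    (hC : MeasurableSet C) (hDC : ∀ z ∈ C, D z ≤ 0)
    (hp : (_root_.stdGaussian d).real C ∈ Ioo (0 : ℝ) 1) {η : ℝ} (hη : 0 ≤ η) :
    Phi (PhiInv ((_root_.stdGaussian d).real C) + η) ≤
      (_root_.stdGaussian d).real {z | D z ≤ η} := by
  rcases hη.eq_or_lt with rfl | hη
  · rw [add_zero, Phi_PhiInv hp]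
    exact measureReal_mono hDC
  · have hlim : Tendsto (fun θ : ℝ ↦ Phi (PhiInv ((_root_.stdGaussian d).real C) + (η - 4 * θ)))
        (𝓝[>] 0) (𝓝 (Phi (PhiInv ((_root_.stdGaussian d).real C) + η))) := by
      have : Continuous fun θ : ℝ ↦
          Phi (PhiInv ((_root_.stdGaussian d).real C) + (η - 4 * θ)) :=
        continuous_Phi.comp (by fun_prop)
      simpa using (this.tendsto 0).mono_left nhdsWithin_le_nhds
    refine le_of_tendsto hlim ?_
    filter_upwards [Ioo_mem_nhdsGT (show (0 : ℝ) < η / 4 by positivity)] with θ hθ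
    exact Phi_PhiInv_add_sub_le_measureReal hL hC hDC hp hθ.1 (by linarith [hθ.2])

end Lipschitz

/-! ### Balanced partitions -/

section DistSet

variable {d : ℕ} {A : Set (Fin d → ℝ)}

lemma l2_sub_comm (x y : Fin d → ℝ) : l2 (x - y) = l2 (y - x) := by
  rw [← neg_sub, ← neg_one_smul ℝ, l2_smul]
  simp

lemma distSet_le_l2 {z z' : Fin d → ℝ} (hz' : z' ∈ A) : distSet z A ≤ l2 (z - z') := by
  refine csInf_le ⟨0, ?_⟩ ⟨z', hz', rfl⟩
  rintro _ ⟨w, _, rfl⟩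
  exact l2_nonneg _

lemma distSet_nonpos {z : Fin d → ℝ} (hz : z ∈ A) : distSet z A ≤ 0 := by
  simpa [l2_zero] using distSet_le_l2 (z := z) hz

lemma abs_distSet_sub_le (hA : A.Nonempty) (x y : Fin d → ℝ) :
    |distSet x A - distSet y A| ≤ l2 (x - y) := by
  have h (x y : Fin d → ℝ) : distSet x A - distSet y A ≤ l2 (x - y) := by
    rw [sub_le_comm]
    obtain ⟨a, ha⟩ := hA
    refine le_csInf ⟨_, a, ha, rfl⟩ ?_
    rintro _ ⟨w, hw, rfl⟩
    have := l2_add_le (x - y) (y - w)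
    rw [sub_add_sub_cancel] at this
    linarith [distSet_le_l2 (z := x) hw]
  refine abs_sub_le_iff.2 ⟨h x y, ?_⟩
  rw [l2_sub_comm]
  exact h y x

lemma measurableSet_distSet_le (A : Set (Fin d → ℝ)) (η : ℝ) :
    MeasurableSet {z | distSet z A ≤ η} := by
  rcases A.eq_empty_or_nonempty with rfl | hA
  · simp [distSet]
  · exact (isClosed_le (continuous_of_abs_sub_le_l2 (abs_distSet_sub_le hA))
      continuous_const).measurableSet

/-- At most a fraction `exp (-η ^ 2 / 2)` of a set of Gaussian measure at most `1 / 2` lies at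
distance more than `η` from its complement. -/
lemma measureReal_lt_distSet_compl_le (hA : MeasurableSet A)
    (hhalf : (_root_.stdGaussian d).real A ≤ 1 / 2) {η : ℝ} (hη : 0 ≤ η) :
    (_root_.stdGaussian d).real {z | η < distSet z Aᶜ} ≤
      exp (-η ^ 2 / 2) * (_root_.stdGaussian d).real A := by
  have hcompl : (_root_.stdGaussian d).real Aᶜ = 1 - (_root_.stdGaussian d).real A :=
    probReal_compl_eq_one_sub hA
  rcases (measureReal_nonneg (μ := _root_.stdGaussian d) (s := A)).eq_or_lt with h0 | h0
  · rw [← h0, mul_zero, h0]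
    refine measureReal_mono fun z hz ↦ ?_
    by_contra hzA
    exact absurd (distSet_nonpos (A := Aᶜ) hzA) (not_le.2 (hη.trans_lt hz))
  · have hmem : (_root_.stdGaussian d).real A ∈ Ioo (0 : ℝ) 1 := ⟨h0, by linarith⟩
    have hne : Aᶜ.Nonempty := by
      refine nonempty_iff_ne_empty.2 fun h ↦ ?_
      rw [h, measureReal_empty] at hcompl
      linarith
    have hp : (_root_.stdGaussian d).real Aᶜ ∈ Ioo (0 : ℝ) 1 := by
      rw [hcompl]
      exact ⟨by linarith, by linarith⟩
    have h := Phi_PhiInv_add_le_measureReal (abs_distSet_sub_le hne) hA.compl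
      (fun z hz ↦ distSet_nonpos hz) hp hη
    obtain ⟨k, hk⟩ := exists_Phi_eq hp
    have hk0 : 0 ≤ k := by
      rw [← strictMono_Phi.le_iff_le, hk, Phi_zero]
      linarith
    have hset : {z | η < distSet z Aᶜ} = {z | distSet z Aᶜ ≤ η}ᶜ := by
      ext z
      simp
    rw [← hk, PhiInv_Phi] at h
    have hA' : (_root_.stdGaussian d).real A = Phi (-k) := by
      rw [Phi_neg, hk]
      linarith
    rw [hset, probReal_compl_eq_one_sub (measurableSet_distSet_le _ _), hA']
    refine le_trans ?_ (Phi_neg_add_le hk0 hη)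
    rw [Phi_neg]
    linarith

end DistSet

/-- If all cells of a Gaussian partition have measure at most `1/2`, then most points are
within ℓ₂-distance `η` of a different cell. -/
theorem partition_boundary_measure_balanced (d K : ℕ)
    (B : Fin K → Set (Fin d → ℝ))
    (hmeas : ∀ i, MeasurableSet (B i))
    (hdisj : Pairwise (Function.onFun Disjoint B))
    (hcover : (⋃ i, B i) = Set.univ)
    (hhalf : ∀ i, ((stdGaussian d) (B i)).toReal ≤ 1 / 2)
    (η : ℝ) (hη : 0 ≤ η) :
    ((stdGaussian d)
        {z | ∃ i, z ∈ B i ∧ distSet z (⋃ j, ⋃ _ : j ≠ i, B j) ≤ η}).toReal ≥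
      1 - Real.sqrt (π / 2) * Real.exp (-η ^ 2 / 2) := by
  have hC (i) : (⋃ j, ⋃ _ : j ≠ i, B j) = (B i)ᶜ := by
    ext z
    simp only [mem_iUnion, mem_compl_iff]
    refine ⟨fun ⟨j, hj, hz⟩ hi ↦ (hdisj hj).le_bot ⟨hz, hi⟩, fun hz ↦ ?_⟩
    obtain ⟨j, hj⟩ := mem_iUnion.1 (hcover ▸ mem_univ z)
    exact ⟨j, fun h ↦ hz (h ▸ hj), hj⟩
  simp only [hC]
  set ν : Measure (Fin d → ℝ) := _root_.stdGaussian d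
  set S : Set (Fin d → ℝ) := {z | ∃ i, z ∈ B i ∧ distSet z (B i)ᶜ ≤ η}
  have hS : MeasurableSet S := by
    rw [show S = ⋃ i, B i ∩ {z | distSet z (B i)ᶜ ≤ η} by ext z; simp [S]]
    exact .iUnion fun i ↦ (hmeas i).inter (measurableSet_distSet_le _ _)
  have hsub : Sᶜ ⊆ ⋃ i, {z | η < distSet z (B i)ᶜ} := fun z hz ↦ by
    obtain ⟨i, hi⟩ := mem_iUnion.1 (hcover ▸ mem_univ z)
    exact mem_iUnion.2 ⟨i, not_le.1 fun h ↦ hz ⟨i, hi, h⟩⟩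
  have hsum : ∑ i, ν.real (B i) = 1 := by
    rw [← measureReal_iUnion_fintype hdisj hmeas, hcover, probReal_univ]
  have hbad : ν.real Sᶜ ≤ exp (-η ^ 2 / 2) :=
    calc ν.real Sᶜ ≤ ∑ i, ν.real {z | η < distSet z (B i)ᶜ} :=
          (measureReal_mono hsub).trans (measureReal_iUnion_fintype_le _)
      _ ≤ ∑ i, exp (-η ^ 2 / 2) * ν.real (B i) :=
          Finset.sum_le_sum fun i _ ↦ measureReal_lt_distSet_compl_le (hmeas i) (hhalf i) hη
      _ = exp (-η ^ 2 / 2) := by rw [← Finset.mul_sum, hsum, mul_one]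
  rw [probReal_compl_eq_one_sub hS] at hbad
  have hsqrt : 1 ≤ √(π / 2) := one_le_sqrt.2 (by linarith [two_le_pi])
  have := le_mul_of_one_le_left (exp_pos (-η ^ 2 / 2)).le hsqrt
  change 1 - √(π / 2) * exp (-η ^ 2 / 2) ≤ ν.real S
  linarith
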